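/- arXiv:2207.02047 — 2 statements merged into one kernel-verified Lean document; each statement's English description precedes it below -/
import Mathlib

section
/- Let f = x⁴ + y⁴ + z⁴ + x·y²·z² in ℂ[x,y,z], and let J₁ be the ideal of ℂ[[x,y,z]] generated by the images of the twelve polynomials x·f, y·f, z·f, f − x·∂f/∂x, x·∂f/∂y, x·∂f/∂z, y·∂f/∂x, f − y·∂f/∂y, y·∂f/∂z, z·∂f/∂x, z·∂f/∂y, f − z·∂f/∂z. Then the image of x·y²·z² in ℂ[[x,y,z]] does not belong to the ideal J₁ + (x,y,z)⁶, where (x,y,z)⁶ denotes the sixth power of the ideal of ℂ[[x,y,z]] generated by x, y, z. -/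
open MvPolynomial

/-- The canonical ring homomorphism `ℂ[x,y,z] → ℂ[[x,y,z]]`. -/
noncomputable def ι : MvPolynomial (Fin 3) ℂ →+* MvPowerSeries (Fin 3) ℂ :=
  MvPolynomial.coeToMvPowerSeries.ringHom

/-- The polynomial `f = x⁴ + y⁴ + z⁴ + x·y²·z²` in `ℂ[x,y,z]`. -/
noncomputable def f : MvPolynomial (Fin 3) ℂ :=
  X 0 ^ 4 + X 1 ^ 4 + X 2 ^ 4 + X 0 * X 1 ^ 2 * X 2 ^ 2

/-- The ideal `J₁` of `ℂ[[x,y,z]]` generated by the images of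
`x·f, y·f, z·f` and `δ_{ij}·f − xᵢ·(∂f/∂xⱼ)` for `i, j = 1, 2, 3`. -/
noncomputable def J₁ : Ideal (MvPowerSeries (Fin 3) ℂ) :=
  Ideal.span
    { ι (X 0 * f), ι (X 1 * f), ι (X 2 * f),
      ι (f - X 0 * pderiv 0 f), ι (X 0 * pderiv 1 f), ι (X 0 * pderiv 2 f),
      ι (X 1 * pderiv 0 f), ι (f - X 1 * pderiv 1 f), ι (X 1 * pderiv 2 f),
      ι (X 2 * pderiv 0 f), ι (X 2 * pderiv 1 f), ι (f - X 2 * pderiv 2 f) }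

/-! The class of `x y² z²` is detected by a linear functional `φ`, a combination of the coefficients
of `x⁴`, `y⁴`, `z⁴` and `x y² z²` chosen so that `φ (q f) = φ (q x ∂f/∂x) = φ (q y ∂f/∂y) =
φ (q z ∂f/∂z) = -4 q(0)` for every power series `q`, while `φ (q xᵢ ∂f/∂xⱼ) = 0` for `i ≠ j`.
Hence `φ` vanishes on `J₁`. It vanishes on `(x, y, z)⁶` because it only sees terms of degree at
most five, but `φ (x y² z²) = 4`. -/

theorem map_eq_zero_of_mem_span {A M : Type*} [Semiring A] [AddZeroClass M] (φ : A →+ M)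
    {s : Set A} (hs : ∀ g ∈ s, ∀ q, φ (q * g) = 0) {p : A} (hp : p ∈ Ideal.span s) : φ p = 0 :=
  Submodule.closure_induction (p := fun p _ ↦ φ p = 0) (map_zero φ)
    (fun x y _ _ hx hy ↦ by rw [map_add, hx, hy, add_zero]) (fun q g hg ↦ hs g hg q) hp

theorem le_order_of_mem_pow {σ R : Type*} [CommSemiring R] {I : Ideal (MvPowerSeries σ R)}
    (hI : I ≤ RingHom.ker MvPowerSeries.constantCoeff) {n : ℕ} {p : MvPowerSeries σ R}
    (hp : p ∈ I ^ n) : (n : ℕ∞) ≤ p.order := by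
  induction n generalizing p with
  | zero => exact zero_le
  | succ n ih =>
    rw [pow_succ] at hp
    induction hp using Submodule.mul_induction_on' with
    | mem_mul_mem a ha b hb =>
      have one_le_order_b : 1 ≤ b.order :=
        MvPowerSeries.one_le_order_iff_constCoeff_eq_zero.2 (hI hb)
      calc ((n + 1 : ℕ) : ℕ∞) = n + 1 := Nat.cast_succ n
        _ ≤ a.order + b.order := add_le_add (ih ha) one_le_order_b
        _ ≤ (a * b).order := MvPowerSeries.le_order_mul
    | add a _ b _ ha hb => exact (le_min ha hb).trans MvPowerSeries.min_order_le_add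

/-- The ideal `J₁` attached to an arbitrary polynomial `g` in any set of variables, generated by the
power series `xᵢ g` and `δᵢⱼ g - xᵢ ∂g/∂xⱼ`. The generators with `i ≠ j` are taken without the
sign. -/
noncomputable def idealJ₁ {σ R : Type*} [CommRing R] (g : MvPolynomial σ R) :
    Ideal (MvPowerSeries σ R) :=
  Ideal.span ({p | ∃ i, p = (X i * g : MvPolynomial σ R)} ∪
    {p | ∃ i, p = (g - X i * pderiv i g : MvPolynomial σ R)} ∪
    {p | ∃ i j, i ≠ j ∧ p = (X i * pderiv j g : MvPolynomial σ R)})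

theorem map_eq_zero_of_mem_idealJ₁ {σ R : Type*} [CommRing R] {g : MvPolynomial σ R}
    (φ : MvPowerSeries σ R →+ R) (c : R)
    (map_mul_g : ∀ q, φ (q * g) = c * MvPowerSeries.constantCoeff q)
    (map_mul_self : ∀ q i, φ (q * (X i * pderiv i g : MvPolynomial σ R)) =
      c * MvPowerSeries.constantCoeff q)
    (map_mul_of_ne : ∀ q i j, i ≠ j → φ (q * (X i * pderiv j g : MvPolynomial σ R)) = 0)
    {p : MvPowerSeries σ R} (hp : p ∈ idealJ₁ g) : φ p = 0 := by
  refine map_eq_zero_of_mem_span φ ?_ hp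
  rintro _ ((⟨i, rfl⟩ | ⟨i, rfl⟩) | ⟨i, j, hij, rfl⟩) q
  · rw [coe_mul, ← mul_assoc, map_mul_g, map_mul, coe_X, MvPowerSeries.constantCoeff_X, mul_zero,
      mul_zero]
  · have coe_sub : ((g - X i * pderiv i g : MvPolynomial σ R) : MvPowerSeries σ R) =
        g - (X i * pderiv i g : MvPolynomial σ R) :=
      map_sub (coeToMvPowerSeries.ringHom (σ := σ) (R := R)) g (X i * pderiv i g)
    rw [coe_sub, mul_sub, map_sub, map_mul_g, map_mul_self, sub_self]
  · exact map_mul_of_ne q i j hij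

/-- The polynomial `x⁴ + y⁴ + z⁴ + x y² z²` over an arbitrary ring of coefficients. -/
noncomputable def deformedFermatQuartic (R : Type*) [CommSemiring R] : MvPolynomial (Fin 3) R :=
  X 0 ^ 4 + X 1 ^ 4 + X 2 ^ 4 + X 0 * X 1 ^ 2 * X 2 ^ 2

theorem J₁_le_idealJ₁ : J₁ ≤ idealJ₁ (deformedFermatQuartic ℂ) := by
  refine Ideal.span_mono ?_
  rintro _ (rfl | rfl | rfl | rfl | rfl | rfl | rfl | rfl | rfl | rfl | rfl | rfl)
  exacts [.inl (.inl ⟨0, rfl⟩), .inl (.inl ⟨1, rfl⟩), .inl (.inl ⟨2, rfl⟩),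
    .inl (.inr ⟨0, rfl⟩), .inr ⟨0, 1, by decide, rfl⟩, .inr ⟨0, 2, by decide, rfl⟩,
    .inr ⟨1, 0, by decide, rfl⟩, .inl (.inr ⟨1, rfl⟩), .inr ⟨1, 2, by decide, rfl⟩,
    .inr ⟨2, 0, by decide, rfl⟩, .inr ⟨2, 1, by decide, rfl⟩, .inl (.inr ⟨2, rfl⟩)]

/-- The exponent vector of the monomial `xᵃ yᵇ zᶜ`. -/
noncomputable def exponent (a b c : ℕ) : Fin 3 →₀ ℕ :=
  Finsupp.single 0 a + Finsupp.single 1 b + Finsupp.single 2 c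

theorem degree_exponent (a b c : ℕ) : (exponent a b c).degree = a + b + c := by
  simp [exponent]

theorem monomial_exponent_one {R : Type*} [CommSemiring R] (a b c : ℕ) :
    (monomial (exponent a b c) 1 : MvPolynomial (Fin 3) R) = X 0 ^ a * X 1 ^ b * X 2 ^ c := by
  simp [exponent, X_pow_eq_monomial, monomial_mul]

theorem deformedFermatQuartic_eq_sum_monomial {R : Type*} [CommSemiring R] :
    deformedFermatQuartic R = monomial (exponent 4 0 0) 1 + monomial (exponent 0 4 0) 1 +
      monomial (exponent 0 0 4) 1 + monomial (exponent 1 2 2) 1 := by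
  simp [deformedFermatQuartic, monomial_exponent_one]

section SeparatingFunctional

variable {R : Type*} [CommRing R]

variable (R) in
/-- The linear functional separating `x y² z²` from `J₁ + (x, y, z)⁶`. The weights `4, -2, -3, -3`
are found by requiring that it take the same value on `f`, `x ∂f/∂x`, `y ∂f/∂y` and `z ∂f/∂z`. -/
noncomputable def separatingFunctional : MvPowerSeries (Fin 3) R →ₗ[R] R :=
  (4 : R) • MvPowerSeries.coeff (exponent 1 2 2) - (2 : R) • MvPowerSeries.coeff (exponent 4 0 0) -
    (3 : R) • MvPowerSeries.coeff (exponent 0 4 0) - (3 : R) • MvPowerSeries.coeff (exponent 0 0 4)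

-- None of the four monomials divides another one, so that only the constant term of `q` matters.
theorem separatingFunctional_mul_monomial_x4 (q : MvPowerSeries (Fin 3) R) (r : R) :
    separatingFunctional R (q * MvPowerSeries.monomial (exponent 4 0 0) r) =
      -2 * (MvPowerSeries.constantCoeff q * r) := by
  simp [separatingFunctional, MvPowerSeries.coeff_mul_monomial, exponent, Finsupp.le_def,
    Fin.forall_fin_succ]

theorem separatingFunctional_mul_monomial_y4 (q : MvPowerSeries (Fin 3) R) (r : R) :
    separatingFunctional R (q * MvPowerSeries.monomial (exponent 0 4 0) r) =
      -3 * (MvPowerSeries.constantCoeff q * r) := by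
  simp [separatingFunctional, MvPowerSeries.coeff_mul_monomial, exponent, Finsupp.le_def,
    Fin.forall_fin_succ]

theorem separatingFunctional_mul_monomial_z4 (q : MvPowerSeries (Fin 3) R) (r : R) :
    separatingFunctional R (q * MvPowerSeries.monomial (exponent 0 0 4) r) =
      -3 * (MvPowerSeries.constantCoeff q * r) := by
  simp [separatingFunctional, MvPowerSeries.coeff_mul_monomial, exponent, Finsupp.le_def,
    Fin.forall_fin_succ]

theorem separatingFunctional_mul_monomial_xy2z2 (q : MvPowerSeries (Fin 3) R) (r : R) :
    separatingFunctional R (q * MvPowerSeries.monomial (exponent 1 2 2) r) =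
      4 * (MvPowerSeries.constantCoeff q * r) := by
  simp [separatingFunctional, MvPowerSeries.coeff_mul_monomial, exponent, Finsupp.le_def,
    Fin.forall_fin_succ]

theorem separatingFunctional_xy2z2 :
    separatingFunctional R (X 0 * X 1 ^ 2 * X 2 ^ 2 : MvPolynomial (Fin 3) R) = 4 := by
  have coe_eq : ((X 0 * X 1 ^ 2 * X 2 ^ 2 : MvPolynomial (Fin 3) R) : MvPowerSeries (Fin 3) R) =
      1 * MvPowerSeries.monomial (exponent 1 2 2) 1 := by
    rw [one_mul, ← coe_monomial, monomial_exponent_one, pow_one]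
  rw [coe_eq, separatingFunctional_mul_monomial_xy2z2, map_one, mul_one, mul_one]

theorem separatingFunctional_mul_deformedFermatQuartic (q : MvPowerSeries (Fin 3) R) :
    separatingFunctional R (q * deformedFermatQuartic R) =
      -4 * MvPowerSeries.constantCoeff q := by
  simp only [deformedFermatQuartic_eq_sum_monomial, coe_add, coe_monomial, mul_add, map_add,
    separatingFunctional_mul_monomial_x4, separatingFunctional_mul_monomial_y4,
    separatingFunctional_mul_monomial_z4, separatingFunctional_mul_monomial_xy2z2]
  ring

theorem separatingFunctional_mul_X_mul_pderiv_self (q : MvPowerSeries (Fin 3) R) (i : Fin 3) :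
    separatingFunctional R
        (q * (X i * pderiv i (deformedFermatQuartic R) : MvPolynomial (Fin 3) R)) =
      -4 * MvPowerSeries.constantCoeff q := by
  simp only [deformedFermatQuartic_eq_sum_monomial, coe_add, coe_monomial, mul_add, map_add,
    X_mul_pderiv_monomial, ← map_nsmul,
    separatingFunctional_mul_monomial_x4, separatingFunctional_mul_monomial_y4,
    separatingFunctional_mul_monomial_z4, separatingFunctional_mul_monomial_xy2z2]
  fin_cases i <;> simp [exponent] <;> ring

-- No monomial of `xᵢ ∂f/∂xⱼ` divides one of the four monomials seen by the functional.
theorem separatingFunctional_mul_X_mul_pderiv_of_ne (q : MvPowerSeries (Fin 3) R) (i j : Fin 3)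
    (hij : i ≠ j) :
    separatingFunctional R
      (q * (X i * pderiv j (deformedFermatQuartic R) : MvPolynomial (Fin 3) R)) = 0 := by
  fin_cases i <;> fin_cases j <;>
    simp [deformedFermatQuartic_eq_sum_monomial, X, pderiv_monomial, monomial_mul, mul_add,
      separatingFunctional, MvPowerSeries.coeff_mul_monomial, exponent, Finsupp.le_def,
      Fin.forall_fin_succ] at hij ⊢

theorem separatingFunctional_eq_zero_of_six_le_order {p : MvPowerSeries (Fin 3) R}
    (hp : 6 ≤ p.order) : separatingFunctional R p = 0 := by
  have coeff_eq_zero (a b c : ℕ) (h : a + b + c < 6) :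
      MvPowerSeries.coeff (exponent a b c) p = 0 := by
    refine MvPowerSeries.coeff_of_lt_order (lt_of_lt_of_le ?_ hp)
    rw [degree_exponent]
    exact_mod_cast h
  simp [separatingFunctional, coeff_eq_zero]

end SeparatingFunctional

theorem stmt_2_general {R : Type*} [CommRing R] (h4 : (4 : R) ≠ 0) :
    ((X 0 * X 1 ^ 2 * X 2 ^ 2 : MvPolynomial (Fin 3) R) : MvPowerSeries (Fin 3) R) ∉
      idealJ₁ (deformedFermatQuartic R) +
        (Ideal.span {(MvPowerSeries.X 0 : MvPowerSeries (Fin 3) R),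
          MvPowerSeries.X 1, MvPowerSeries.X 2}) ^ 6 := by
  intro hmem
  obtain ⟨p, hp, r, hr, hpr⟩ := Submodule.mem_sup.1 hmem
  have map_p : separatingFunctional R p = 0 :=
    map_eq_zero_of_mem_idealJ₁ (separatingFunctional R).toAddMonoidHom (-4)
      separatingFunctional_mul_deformedFermatQuartic separatingFunctional_mul_X_mul_pderiv_self
      separatingFunctional_mul_X_mul_pderiv_of_ne hp
  have span_le : Ideal.span {(MvPowerSeries.X 0 : MvPowerSeries (Fin 3) R), MvPowerSeries.X 1,
      MvPowerSeries.X 2} ≤ RingHom.ker MvPowerSeries.constantCoeff := by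
    simp [Ideal.span_le, Set.insert_subset_iff]
  have map_r : separatingFunctional R r = 0 :=
    separatingFunctional_eq_zero_of_six_le_order (le_order_of_mem_pow span_le hr)
  refine h4 ?_
  calc (4 : R) = separatingFunctional R (X 0 * X 1 ^ 2 * X 2 ^ 2 : MvPolynomial (Fin 3) R) :=
        separatingFunctional_xy2z2.symm
    _ = 0 := by rw [← hpr, map_add, map_p, map_r, add_zero]

theorem stmt_2 :
    ι (X 0 * X 1 ^ 2 * X 2 ^ 2) ∉
      J₁ + (Ideal.span {(MvPowerSeries.X 0 : MvPowerSeries (Fin 3) ℂ),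
        MvPowerSeries.X 1, MvPowerSeries.X 2}) ^ 6 :=
  fun hmem ↦ stmt_2_general (R := ℂ) (by norm_num) (add_le_add_left J₁_le_idealJ₁ _ hmem)
end

section
/- Let f = x⁴ + y⁴ + z⁴ + x·y²·z² in ℂ[x,y,z], and let J₁ be the ideal of ℂ[[x,y,z]] generated by the images of the twelve polynomials x·f, y·f, z·f, f − x·∂f/∂x, x·∂f/∂y, x·∂f/∂z, y·∂f/∂x, f − y·∂f/∂y, y·∂f/∂z, z·∂f/∂x, z·∂f/∂y, f − z·∂f/∂z. Then (x,y,z)⁶ ⊆ J₁, i.e., the sixth power of the ideal of ℂ[[x,y,z]] generated by x, y, z is contained in J₁ (equivalently, every monomial of total degree 6 in x, y, z lies in J₁). -/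
open MvPolynomial

/-!
Write `f = h + w` with `h = x⁴ + y⁴ + z⁴` and `w = x y² z²`. Modulo the ideal, `xᵢ` kills both `f`
and every `xⱼ ∂ⱼf`, hence by Euler's identity also `4h + 5w = 4f + w`; so it kills `w`, and then
each `xⱼ⁴` because `xⱼ ∂ⱼf` is `4xⱼ⁴` plus a multiple of `w`. A monomial of degree six divisible by
neither a fourth power nor `w` has a factor `xⱼ³ xᵢ` with `i ≠ j`, and the relation
`4 xⱼ³ xᵢ ≡ -xᵢ ∂ⱼw` trades it for a multiple of monomials already known to vanish.
-/

section FermatPolynomial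

variable {σ R : Type*} [CommSemiring R] [Fintype σ]

variable (σ R) in
/-- The Fermat polynomial `∑ xᵢⁿ`, for `n = 4` the part `h` of `f` of lowest degree. -/
noncomputable def fermatPolynomial (n : ℕ) : MvPolynomial σ R :=
  ∑ i, X i ^ n

lemma isHomogeneous_fermatPolynomial (n : ℕ) : (fermatPolynomial σ R n).IsHomogeneous n :=
  IsHomogeneous.sum _ _ _ fun i _ ↦ isHomogeneous_X_pow i n

lemma pderiv_fermatPolynomial (n : ℕ) (j : σ) :
    pderiv j (fermatPolynomial σ R n) = (n : MvPolynomial σ R) * X j ^ (n - 1) := by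
  classical
  simp [fermatPolynomial, Derivation.leibniz_pow, pderiv_X, Pi.single_apply]

end FermatPolynomial

section EulerIdeal

variable {σ R : Type*} [CommRing R] [DecidableEq σ]

/-- The ideal generated by all `xᵢ g` and all `δᵢⱼ g - xᵢ ∂ⱼg`, for a polynomial `g` over any
commutative ring and in any set of variables: the analogue of `J₁` in the polynomial ring. -/
noncomputable def eulerIdeal (g : MvPolynomial σ R) : Ideal (MvPolynomial σ R) :=
  Ideal.span (Set.range (fun i ↦ X i * g) ∪
    Set.range fun p : σ × σ ↦ (if p.1 = p.2 then g else 0) - X p.1 * pderiv p.2 g)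

namespace eulerIdeal

lemma X_mul_mem (g : MvPolynomial σ R) (i : σ) : X i * g ∈ eulerIdeal g :=
  Ideal.subset_span (.inl ⟨i, rfl⟩)

lemma sub_X_mul_pderiv_mem (g : MvPolynomial σ R) (i : σ) :
    g - X i * pderiv i g ∈ eulerIdeal g :=
  Ideal.subset_span (.inr ⟨(i, i), by simp⟩)

lemma X_mul_pderiv_mem (g : MvPolynomial σ R) {i j : σ} (hij : i ≠ j) :
    X i * pderiv j g ∈ eulerIdeal g :=
  neg_mem_iff.mp (Ideal.subset_span (.inr ⟨(i, j), by simp [hij]⟩))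

lemma X_mul_X_mul_pderiv_mem (g : MvPolynomial σ R) (i j : σ) :
    X i * (X j * pderiv j g) ∈ eulerIdeal g := by
  have h := sub_mem (X_mul_mem g i) (Ideal.mul_mem_left _ (X i) (sub_X_mul_pderiv_mem g j))
  rwa [← mul_sub, sub_sub_cancel] at h

variable [Fintype σ] {n m : ℕ} {w : MvPolynomial σ R}

lemma X_mul_perturbation_mem (hw : w.IsHomogeneous m) (hmn : IsUnit ((m : R) - n))
    (i : σ) : X i * w ∈ eulerIdeal (fermatPolynomial σ R n + w) := by
  set g := fermatPolynomial σ R n + w with hg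
  have euler : ∑ j, X j * pderiv j g = (n : MvPolynomial σ R) * g + C ((m : R) - n) * w := by
    simp only [hg, map_add, mul_add, Finset.sum_add_distrib,
      (isHomogeneous_fermatPolynomial n).sum_X_mul_pderiv, hw.sum_X_mul_pderiv, nsmul_eq_mul,
      map_sub, map_natCast]
    ring
  have hsum : X i * ∑ j, X j * pderiv j g ∈ eulerIdeal g := by
    rw [Finset.mul_sum]
    exact sum_mem fun j _ ↦ X_mul_X_mul_pderiv_mem g i j
  rw [← Ideal.unit_mul_mem_iff_mem _ (hmn.map C)]
  convert sub_mem hsum (Ideal.mul_mem_left _ (n : MvPolynomial σ R) (X_mul_mem g i)) using 1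
  rw [euler]
  ring

lemma X_mul_X_pow_mem (hn : IsUnit (n : R)) (hw : w.IsHomogeneous m)
    (hmn : IsUnit ((m : R) - n)) {j : σ} (hj : w ∣ X j * pderiv j w) (i : σ) :
    X i * X j ^ n ∈ eulerIdeal (fermatPolynomial σ R n + w) := by
  have hwj : X i * (X j * pderiv j w) ∈ eulerIdeal (fermatPolynomial σ R n + w) :=
    Ideal.mem_of_dvd _ (mul_dvd_mul_left _ hj) (X_mul_perturbation_mem hw hmn i)
  have hpow : X j * pderiv j (fermatPolynomial σ R n) = C (n : R) * X j ^ n := by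
    obtain rfl | hn0 := eq_or_ne n 0
    · simp [fermatPolynomial]
    · rw [pderiv_fermatPolynomial, map_natCast, mul_left_comm, mul_pow_sub_one hn0]
  rw [← Ideal.unit_mul_mem_iff_mem _ (hn.map C)]
  convert sub_mem (X_mul_X_mul_pderiv_mem _ i j) hwj using 1
  rw [map_add]
  linear_combination -X i * hpow

lemma mul_X_pow_pred_mem_of_mul_pderiv_mem (hn : IsUnit (n : R)) {i j : σ} (hij : i ≠ j)
    {q : MvPolynomial σ R} (hq : X i ∣ q)
    (hqw : q * pderiv j w ∈ eulerIdeal (fermatPolynomial σ R n + w)) :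
    q * X j ^ (n - 1) ∈ eulerIdeal (fermatPolynomial σ R n + w) := by
  have hqj := Ideal.mem_of_dvd _ (mul_dvd_mul_right hq _)
    (X_mul_pderiv_mem (fermatPolynomial σ R n + w) hij)
  rw [← Ideal.unit_mul_mem_iff_mem _ (hn.map C)]
  convert sub_mem hqj hqw using 1
  rw [map_add, pderiv_fermatPolynomial, map_natCast]
  ring

end eulerIdeal

end EulerIdeal

lemma monomial_one_mem_of_lt {σ R : Type*} [CommSemiring R] {I : Ideal (MvPolynomial σ R)}
    {s d : σ →₀ ℕ} (hI : ∀ i, X i * monomial s 1 ∈ I) (hsd : s < d) :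
    monomial d (1 : R) ∈ I := by
  obtain ⟨e, rfl⟩ := exists_add_of_le hsd.le
  obtain ⟨i, hi⟩ : ∃ i, e i ≠ 0 := by
    by_contra! he
    simp [show e = 0 from Finsupp.ext he] at hsd
  have hdvd : X i ∣ monomial e (1 : R) := X_dvd_monomial.mpr (.inr hi)
  rw [← mul_one (1 : R), ← monomial_mul, mul_comm]
  exact I.mem_of_dvd (mul_dvd_mul_right hdvd _) (hI i)

section Quartic

variable (R : Type*) [CommRing R]

/-- The quintic term `w = x y² z²` of `f`, over an arbitrary commutative ring. -/
noncomputable def quinticTerm : MvPolynomial (Fin 3) R :=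
  X 0 * X 1 ^ 2 * X 2 ^ 2

lemma isHomogeneous_quinticTerm : (quinticTerm R).IsHomogeneous 5 :=
  ((isHomogeneous_X R 0).mul (isHomogeneous_X_pow 1 2)).mul (isHomogeneous_X_pow 2 2)

lemma pderiv_quinticTerm (j : Fin 3) :
    pderiv j (quinticTerm R) =
      ![X 1 ^ 2 * X 2 ^ 2, 2 * X 0 * X 1 * X 2 ^ 2, 2 * X 0 * X 1 ^ 2 * X 2] j := by
  fin_cases j <;> simp [quinticTerm, Derivation.leibniz_pow, pderiv_X] <;> ring

lemma quinticTerm_dvd_X_mul_pderiv (j : Fin 3) :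
    quinticTerm R ∣ X j * pderiv j (quinticTerm R) := by
  refine ⟨![1, 2, 2] j, ?_⟩
  rw [pderiv_quinticTerm]
  fin_cases j <;> simp [quinticTerm] <;> ring

/-- The polynomial `f` of the theorem, over an arbitrary commutative ring. -/
noncomputable def quartic : MvPolynomial (Fin 3) R :=
  X 0 ^ 4 + X 1 ^ 4 + X 2 ^ 4 + X 0 * X 1 ^ 2 * X 2 ^ 2

lemma quartic_eq_fermatPolynomial_add :
    quartic R = fermatPolynomial (Fin 3) R 4 + quinticTerm R := by
  rw [quartic, fermatPolynomial, Fin.sum_univ_three, quinticTerm]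

variable {R}

lemma monomial_one_fin_three (a b c : ℕ) :
    monomial (Finsupp.equivFunOnFinite.symm ![a, b, c]) (1 : R) = X 0 ^ a * X 1 ^ b * X 2 ^ c := by
  rw [monomial_eq, map_one, one_mul, Finsupp.prod_fintype _ _ fun _ ↦ pow_zero _,
    Fin.prod_univ_three]
  rfl

lemma isUnit_natCast_four (h2 : IsUnit (2 : R)) : IsUnit ((4 : ℕ) : R) := by
  convert h2.mul h2
  norm_num

namespace quartic

lemma X_mul_quinticTerm_mem (i : Fin 3) : X i * quinticTerm R ∈ eulerIdeal (quartic R) := by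
  rw [quartic_eq_fermatPolynomial_add]
  exact eulerIdeal.X_mul_perturbation_mem (isHomogeneous_quinticTerm R) (by norm_num) i

lemma X_mul_X_pow_four_mem (h2 : IsUnit (2 : R)) (i j : Fin 3) :
    X i * X j ^ 4 ∈ eulerIdeal (quartic R) := by
  rw [quartic_eq_fermatPolynomial_add]
  exact eulerIdeal.X_mul_X_pow_mem (isUnit_natCast_four h2) (isHomogeneous_quinticTerm R)
    (by norm_num) (quinticTerm_dvd_X_mul_pderiv R j) i

lemma mul_X_pow_three_mem_of_mul_pderiv_mem (h2 : IsUnit (2 : R)) {i j : Fin 3} (hij : i ≠ j)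
    {q : MvPolynomial (Fin 3) R} (hq : X i ∣ q)
    (hqw : q * pderiv j (quinticTerm R) ∈ eulerIdeal (quartic R)) :
    q * X j ^ 3 ∈ eulerIdeal (quartic R) := by
  rw [quartic_eq_fermatPolynomial_add] at hqw ⊢
  exact eulerIdeal.mul_X_pow_pred_mem_of_mul_pderiv_mem (isUnit_natCast_four h2) hij hq hqw

lemma mem_of_four_le (h2 : IsUnit (2 : R)) {a b c : ℕ} (h4 : 4 ≤ a ∨ 4 ≤ b ∨ 4 ≤ c)
    (h5 : 4 < a + b + c) : X 0 ^ a * X 1 ^ b * X 2 ^ c ∈ eulerIdeal (quartic R) := by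
  obtain ⟨j, hj⟩ : ∃ j, 4 ≤ ![a, b, c] j := by simpa [Fin.exists_fin_succ] using h4
  rw [← monomial_one_fin_three]
  refine monomial_one_mem_of_lt (s := .single j 4) (fun i ↦ ?_) (lt_of_le_of_ne ?_ fun h ↦ h5.ne ?_)
  · rw [← X_pow_eq_monomial]
    exact X_mul_X_pow_four_mem h2 i j
  · exact Finsupp.single_le_iff.mpr hj
  · simpa [Finsupp.degree_eq_sum, Fin.sum_univ_three] using congrArg Finsupp.degree h

lemma mem_of_one_le_of_two_le_of_two_le {a b c : ℕ} (ha : 1 ≤ a) (hb : 2 ≤ b) (hc : 2 ≤ c)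
    (h5 : 5 < a + b + c) : X 0 ^ a * X 1 ^ b * X 2 ^ c ∈ eulerIdeal (quartic R) := by
  rw [← monomial_one_fin_three]
  refine monomial_one_mem_of_lt (s := Finsupp.equivFunOnFinite.symm ![1, 2, 2]) (fun i ↦ ?_)
    (lt_of_le_of_ne ?_ fun h ↦ h5.ne ?_)
  · rw [monomial_one_fin_three, pow_one]
    exact X_mul_quinticTerm_mem i
  · intro i
    fin_cases i <;> assumption
  · simpa [Finsupp.degree_eq_sum, Fin.sum_univ_three] using congrArg Finsupp.degree h

lemma X_zero_pow_three_mul_mem (h2 : IsUnit (2 : R)) {b c : ℕ} (hbc : 3 ≤ b + c) :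
    X 0 ^ 3 * X 1 ^ b * X 2 ^ c ∈ eulerIdeal (quartic R) := by
  obtain ⟨i, hi, hdvd⟩ : ∃ i ≠ 0, (X i : MvPolynomial (Fin 3) R) ∣ X 1 ^ b * X 2 ^ c := by
    obtain hb | hc : b ≠ 0 ∨ c ≠ 0 := by omega
    · exact ⟨1, by decide, dvd_mul_of_dvd_left (dvd_pow_self _ hb) _⟩
    · exact ⟨2, by decide, dvd_mul_of_dvd_right (dvd_pow_self _ hc) _⟩
  have h := mul_X_pow_three_mem_of_mul_pderiv_mem h2 hi hdvd <| by
    convert mem_of_four_le (a := 0) (b := b + 2) (c := c + 2) h2 (by omega) (by omega) using 1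
    simp only [pderiv_quinticTerm, Matrix.cons_val_zero]
    ring
  convert h using 1
  ring

lemma X_one_pow_three_mul_X_two_pow_three_mem (h2 : IsUnit (2 : R)) :
    X 1 ^ 3 * X 2 ^ 3 ∈ eulerIdeal (quartic R) := by
  have h := mul_X_pow_three_mem_of_mul_pderiv_mem (i := 2) (j := 1) (q := X 2 ^ 3) h2 (by decide)
    (dvd_pow_self _ three_ne_zero) <| by
    convert Ideal.mul_mem_left _ 2
      (mem_of_four_le (a := 1) (b := 1) (c := 5) h2 (by omega) (by omega)) using 1
    simp only [pderiv_quinticTerm, Matrix.cons_val_one, Matrix.cons_val_zero]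
    ring
  rwa [mul_comm] at h

lemma X_zero_sq_mul_X_one_pow_three_mul_X_two_mem (h2 : IsUnit (2 : R)) :
    X 0 ^ 2 * X 1 ^ 3 * X 2 ∈ eulerIdeal (quartic R) := by
  have h := mul_X_pow_three_mem_of_mul_pderiv_mem (i := 2) (j := 1) (q := X 0 ^ 2 * X 2) h2
    (by decide) (dvd_mul_left _ _) <| by
    convert Ideal.mul_mem_left _ 2 (X_zero_pow_three_mul_mem (b := 1) (c := 3) h2 (by omega))
      using 1
    simp only [pderiv_quinticTerm, Matrix.cons_val_one, Matrix.cons_val_zero]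
    ring
  convert h using 1
  ring

lemma X_zero_sq_mul_X_one_mul_X_two_pow_three_mem (h2 : IsUnit (2 : R)) :
    X 0 ^ 2 * X 1 * X 2 ^ 3 ∈ eulerIdeal (quartic R) := by
  have h := mul_X_pow_three_mem_of_mul_pderiv_mem (i := 1) (j := 2) (q := X 0 ^ 2 * X 1) h2
    (by decide) (dvd_mul_left _ _) <| by
    convert Ideal.mul_mem_left _ 2 (X_zero_pow_three_mul_mem (b := 3) (c := 1) h2 (by omega))
      using 1
    simp only [pderiv_quinticTerm, Matrix.cons_val]
    ring
  exact h

lemma mem_of_add_eq_six (h2 : IsUnit (2 : R)) {a b c : ℕ} (habc : a + b + c = 6) :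
    X 0 ^ a * X 1 ^ b * X 2 ^ c ∈ eulerIdeal (quartic R) := by
  obtain h4 | rfl | ⟨ha, hb, hc⟩ | ⟨rfl, rfl, rfl⟩ | ⟨rfl, rfl, rfl⟩ | ⟨rfl, rfl, rfl⟩ :
      (4 ≤ a ∨ 4 ≤ b ∨ 4 ≤ c) ∨ a = 3 ∨ (1 ≤ a ∧ 2 ≤ b ∧ 2 ≤ c) ∨
        (a = 0 ∧ b = 3 ∧ c = 3) ∨ (a = 2 ∧ b = 3 ∧ c = 1) ∨ (a = 2 ∧ b = 1 ∧ c = 3) := by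
    omega
  · exact mem_of_four_le h2 h4 (by omega)
  · exact X_zero_pow_three_mul_mem h2 (by omega)
  · exact mem_of_one_le_of_two_le_of_two_le ha hb hc (by omega)
  · simpa only [pow_zero, one_mul] using X_one_pow_three_mul_X_two_pow_three_mem h2
  · simpa only [pow_one] using X_zero_sq_mul_X_one_pow_three_mul_X_two_mem h2
  · simpa only [pow_one] using X_zero_sq_mul_X_one_mul_X_two_pow_three_mem h2

end quartic

end Quartic

theorem stmt_5_general {R : Type*} [CommRing R] (h2 : IsUnit (2 : R)) :
    idealOfVars (Fin 3) R ^ 6 ≤ eulerIdeal (quartic R) := by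
  rw [pow_idealOfVars_eq_span, Ideal.span_le]
  rintro _ ⟨d, hd, rfl⟩
  have hd_eq : d = Finsupp.equivFunOnFinite.symm ![d 0, d 1, d 2] := by
    ext i
    fin_cases i <;> rfl
  change monomial d 1 ∈ eulerIdeal (quartic R)
  rw [hd_eq, monomial_one_fin_three]
  exact quartic.mem_of_add_eq_six h2 (by simpa [Finsupp.degree_eq_sum, Fin.sum_univ_three] using hd)

lemma map_ι_idealOfVars :
    (idealOfVars (Fin 3) ℂ).map ι =
      Ideal.span {MvPowerSeries.X 0, MvPowerSeries.X 1, MvPowerSeries.X 2} := by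
  have ι_X (i : Fin 3) : ι (X i) = MvPowerSeries.X i := coe_X i
  rw [Ideal.map_span, ← Set.range_comp]
  congr 1
  ext p
  simp [Fin.exists_fin_succ, ι_X, eq_comm]

lemma map_ι_eulerIdeal_quartic_le : (eulerIdeal (quartic ℂ)).map ι ≤ J₁ := by
  rw [eulerIdeal, Ideal.map_span, Ideal.span_le]
  rintro _ ⟨_, ⟨i, rfl⟩ | ⟨⟨i, j⟩, rfl⟩, rfl⟩
  · fin_cases i <;> exact Ideal.subset_span (by simp [f, quartic])
  · change ι ((if i = j then f else 0) - X i * pderiv j f) ∈ J₁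
    obtain rfl | hij := eq_or_ne i j
    · rw [if_pos rfl]
      fin_cases i <;> exact Ideal.subset_span (by simp)
    · rw [if_neg hij, zero_sub, map_neg, neg_mem_iff]
      fin_cases i <;> fin_cases j <;>
        first | exact absurd rfl hij | exact Ideal.subset_span (by simp)

theorem stmt_5 :
    (Ideal.span {(MvPowerSeries.X 0 : MvPowerSeries (Fin 3) ℂ),
      MvPowerSeries.X 1, MvPowerSeries.X 2}) ^ 6 ≤ J₁ := by
  rw [← map_ι_idealOfVars, ← Ideal.map_pow]
  exact (Ideal.map_mono (stmt_5_general (by norm_num))).trans map_ι_eulerIdeal_quartic_le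
end
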